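/- Let (X,μ) be a good Cantor measure space with a compatible metric d, B ⊆ X Borel with μ(B) = μ(X), and A ⊆ C closed nowhere dense subsets of X with A ⊆ B. For every ε > 0 there exists a measure-preserving homeomorphism h of X with h restricted to A equal to the identity, h(C) ⊆ B, and d_H(h, id) ≤ ε. -/

import Mathlib

/-!
The homeomorphism is built by a back-and-forth refinement of clopen partitions. Inner regularity
gives a closed set `K` with `A ⊆ K ⊆ B` such that `K \ A` charges every clopen set meeting `A` and,
in each cell `V` of a partition into cells of diameter at most `ε / 2`, is larger than `C \ A`
(`exists_target`). This is possible because `C` is nowhere dense and `μ` has full support, so that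
`μ (V ∩ C) < μ V` for every nonempty clopen `V`.

A source cell `p` and a target cell `q` are *matched* (`Matched`) when they have the same measure
and the same trace on `A`, and `q ∩ (K \ A)` is larger than `p ∩ (C \ A)` unless the latter is empty.
Every clopen split of one of two matched cells can be mirrored by a split of the other (`forward`,
`backward`): the Subset Condition allows one to find clopen sets of exactly the right measure that
contain one prescribed closed set and avoid another (`extend_clopen`), and since `μ` has no atoms
`C \ A` and `K \ A` can be divided in nearly any proportion (`exists_between_clopen`).

Starting from the fine partition matched with itself and resolving the countably many clopen sets
one after the other on both sides, the matched cells shrink to points and define a homeomorphism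
`h` (`exists_homeo`). It preserves `μ` since matched cells have the same measure (`preserves`), fixes
`A` since they have the same trace on `A`, and moves points by at most `ε / 2`, as does its inverse.
Finally `h c ∈ K` for `c ∈ C \ A`: the source cells of `c` meet `C \ A`, so their targets, which
shrink to `h c`, all meet the closed set `K`.
-/

open MeasureTheory Set

/-! ### Clopen sets of prescribed measure -/

lemma mu_split {X : Type*} [MeasurableSpace X] (μ : Measure X) [IsFiniteMeasure μ]
    (s t : Set X) (ht : MeasurableSet t) :
    μ.real (s ∩ t) + μ.real (s \ t) = μ.real s :=
  measureReal_inter_add_sdiff ht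

/-- Outer regularity through clopen sets: a closed set inside an open set has a clopen
neighbourhood inside it whose measure is only slightly larger. -/
lemma clopen_nbhd {X : Type*} [MetricSpace X] [CompactSpace X] [TotallyDisconnectedSpace X]
    [MeasurableSpace X] [BorelSpace X] (ν : Measure X) [IsFiniteMeasure ν]
    {D O : Set X} (hD : IsClosed D) (hO : IsOpen O) (hDO : D ⊆ O) {m : ℝ} (hm : ν.real D < m) :
    ∃ r : Set X, IsClopen r ∧ D ⊆ r ∧ r ⊆ O ∧ ν.real r < m := by
  have hm' : ν D < ENNReal.ofReal m :=
    (ENNReal.lt_ofReal_iff_toReal_lt (measure_ne_top ν D)).2 hm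
  obtain ⟨G, hDG, hGo, hG⟩ := D.exists_isOpen_lt_of_lt _ hm'
  obtain ⟨r, hr, hDr, hrG⟩ := exists_clopen_of_closed_subset_open hD (hGo.inter hO)
    (subset_inter hDG hDO)
  refine ⟨r, hr, hDr, hrG.trans inter_subset_right, ?_⟩
  refine (measureReal_mono (hrG.trans inter_subset_left)).trans_lt ?_
  exact (ENNReal.lt_ofReal_iff_toReal_lt (measure_ne_top ν G)).1 hG

/-- A finite measure without atoms takes clopen values in every interval `(α, β)` compatible with
the bounds `lo ⊆ s ⊆ hi`. One adds to `lo` clopen pieces of measure less than `β - α` until the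
measure first exceeds `α`; compactness makes finitely many pieces enough to exhaust `hi`. -/
lemma exists_between_clopen {X : Type*} [MetricSpace X] [CompactSpace X]
    [TotallyDisconnectedSpace X] [MeasurableSpace X] [BorelSpace X]
    (ν : Measure X) [IsFiniteMeasure ν] (hν : ∀ x, ν {x} = 0)
    {lo hi : Set X} (hlo : IsClopen lo) (hhi : IsClopen hi) (hsub : lo ⊆ hi) {α β : ℝ}
    (hαβ : α < β) (hβ : ν.real lo < β) (hα : α < ν.real hi) :
    ∃ s : Set X, IsClopen s ∧ lo ⊆ s ∧ s ⊆ hi ∧ α < ν.real s ∧ ν.real s < β := by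
  have key : ∀ l : Set X, IsClopen l → l ⊆ hi → ν.real l < β →
      ∃ s : Set X, IsClopen s ∧ l ⊆ s ∧ s ⊆ hi ∧ ν.real s < β ∧
        (α < ν.real s ∨ hi ∩ univ ⊆ s) := by
    refine isCompact_univ.induction_on (p := fun S => ∀ l : Set X, IsClopen l → l ⊆ hi →
      ν.real l < β → ∃ s : Set X, IsClopen s ∧ l ⊆ s ∧ s ⊆ hi ∧ ν.real s < β ∧
        (α < ν.real s ∨ hi ∩ S ⊆ s)) ?_ ?_ ?_ ?_
    · intro l hl hlh hlb
      exact ⟨l, hl, Subset.rfl, hlh, hlb, Or.inr (by simp)⟩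
    · intro S T hST hT l hl hlh hlb
      obtain ⟨s, h1, h2, h3, h4, h5⟩ := hT l hl hlh hlb
      exact ⟨s, h1, h2, h3, h4, h5.imp_right fun h => (inter_subset_inter_right _ hST).trans h⟩
    · intro S T hS hT l hl hlh hlb
      obtain ⟨s, h1, h2, h3, h4, h5⟩ := hS l hl hlh hlb
      rcases h5 with h5 | h5
      · exact ⟨s, h1, h2, h3, h4, Or.inl h5⟩
      obtain ⟨t, k1, k2, k3, k4, k5⟩ := hT s h1 h3 h4
      refine ⟨t, k1, h2.trans k2, k3, k4, k5.imp_right fun h => ?_⟩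
      rw [inter_union_distrib_left]
      exact union_subset (h5.trans k2) h
    · intro x _
      obtain ⟨t, ht, hxt, -, htm⟩ := clopen_nbhd ν (isClosed_singleton (x := x)) isOpen_univ
        (subset_univ _) (m := β - α) (by simp [measureReal_def, hν]; linarith)
      refine ⟨t, mem_nhdsWithin_of_mem_nhds (ht.isOpen.mem_nhds (hxt rfl)), ?_⟩
      intro l hl hlh hlb
      by_cases h : α < ν.real l
      · exact ⟨l, hl, Subset.rfl, hlh, hlb, Or.inl h⟩
      refine ⟨l ∪ (hi ∩ t), hl.union (hhi.inter ht), subset_union_left,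
        union_subset hlh inter_subset_left, ?_, Or.inr subset_union_right⟩
      have h1 := measureReal_union_le (μ := ν) l (hi ∩ t)
      have h2 : ν.real (hi ∩ t) ≤ ν.real t := measureReal_mono inter_subset_right
      linarith
  obtain ⟨s, h1, h2, h3, h4, h5⟩ := key lo hlo hsub hβ
  refine ⟨s, h1, h2, h3, ?_, h4⟩
  rcases h5 with h5 | h5
  · exact h5
  · exact hα.trans_le (measureReal_mono (by simpa using h5))

/-- The only place where the Subset Condition enters: if `q` has the measure of a clopen set `p₁`
plus `a₂`, and `D₁`, `D₂` are disjoint closed subsets of `q` of measure less than `μ p₁` and `a₂`,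
then some clopen `q₁ ⊆ q` contains `D₁`, misses `D₂` and has measure exactly `μ p₁`. -/
lemma extend_clopen {X : Type*} [MetricSpace X] [CompactSpace X] [TotallyDisconnectedSpace X]
    [MeasurableSpace X] [BorelSpace X] (μ : Measure X) [IsFiniteMeasure μ]
    (hsc : ∀ U V : Set X, IsClopen U → IsClopen V → μ.real U < μ.real V →
      ∃ W, W ⊆ V ∧ IsClopen W ∧ μ.real W = μ.real U)
    {p₁ q D₁ D₂ : Set X} {a₂ : ℝ} (hp₁ : IsClopen p₁) (hq : IsClopen q)
    (hpq : μ.real q = μ.real p₁ + a₂) (hD₁ : IsClosed D₁) (hD₂ : IsClosed D₂)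
    (hD : Disjoint D₁ D₂) (h₁q : D₁ ⊆ q) (h₂q : D₂ ⊆ q)
    (h₁ : μ.real D₁ < μ.real p₁) (h₂ : μ.real D₂ < a₂) :
    ∃ q₁ : Set X, IsClopen q₁ ∧ D₁ ⊆ q₁ ∧ q₁ ⊆ q ∧ Disjoint q₁ D₂ ∧ μ.real q₁ = μ.real p₁ := by
  obtain ⟨r₁, hr₁, hDr₁, hrq₁, hm₁⟩ := clopen_nbhd μ hD₁ (hq.isOpen.inter hD₂.isOpen_compl)
    (subset_inter h₁q hD.subset_compl_right) h₁
  obtain ⟨r₂, hr₂, hDr₂, hrq₂, hm₂⟩ := clopen_nbhd μ hD₂ (hq.isOpen.inter hr₁.compl.isOpen)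
    (fun x hx => ⟨h₂q hx, fun h => (hrq₁ h).2 hx⟩) h₂
  -- A copy `W` of `r₁` inside `p₁` shows that the missing measure `μ p₁ - μ r₁` is the measure
  -- of the clopen set `p₁ \ W`, which is then copied into the part of `q` outside `r₁ ∪ r₂`.
  obtain ⟨W, hWp, hW, hWm⟩ := hsc r₁ p₁ hr₁ hp₁ hm₁
  have e1 := mu_split μ p₁ W hW.isOpen.measurableSet
  rw [inter_eq_self_of_subset_right hWp] at e1
  have e2 := mu_split μ q r₁ hr₁.isOpen.measurableSet
  rw [inter_eq_self_of_subset_right fun x hx => (hrq₁ hx).1] at e2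
  have e3 := mu_split μ (q \ r₁) r₂ hr₂.isOpen.measurableSet
  rw [inter_eq_self_of_subset_right (show r₂ ⊆ q \ r₁ from hrq₂)] at e3
  obtain ⟨W', hWp', hW', hWm'⟩ := hsc (p₁ \ W) ((q \ r₁) \ r₂) (hp₁.diff hW)
    ((hq.diff hr₁).diff hr₂) (by linarith)
  refine ⟨r₁ ∪ W', hr₁.union hW', hDr₁.trans subset_union_left,
    union_subset (fun x hx => (hrq₁ hx).1) (fun x hx => (hWp' hx).1.1), ?_, ?_⟩
  · rw [Set.disjoint_left]
    rintro x (hx | hx) hx2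
    · exact (hrq₁ hx).2 hx2
    · exact (hWp' hx).2 (hDr₂ hx2)
  · rw [measureReal_union (Set.disjoint_left.2 fun x hx hx' => (hWp' hx').1.2 hx)
      hW'.isOpen.measurableSet]
    linarith

/-! ### Splitting matched cells -/

/-- The invariant of the back-and-forth construction for a source cell `p` and the target cell `q`
onto which it is to be mapped: equal measure, equal trace on `A` (so that `A` can stay fixed), and
strictly more room in `q ∩ (K \ A)` than `p ∩ (C \ A)` needs, unless there is nothing to place.
The empty alternative keeps the invariant available for cells whose target misses `K \ A`. -/
def Matched {X : Type*} [MeasurableSpace X] (μ : Measure X) (A C K p q : Set X) : Prop :=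
  μ.real p = μ.real q ∧ p ∩ A = q ∩ A ∧
    (p ∩ (C \ A) = ∅ ∨ μ.real (p ∩ (C \ A)) < μ.real (q ∩ (K \ A)))

lemma mu_parts {X : Type*} [MeasurableSpace X] (μ : Measure X) [IsFiniteMeasure μ]
    {A K : Set X} (hA : MeasurableSet A) (hAK : A ⊆ K) (s : Set X) :
    μ.real (s ∩ K) = μ.real (s ∩ A) + μ.real (s ∩ (K \ A)) := by
  rw [← mu_split μ (s ∩ K) A hA, inter_assoc, inter_eq_self_of_subset_right hAK, inter_sdiff_assoc]

lemma mu_cut {X : Type*} [MeasurableSpace X] (μ : Measure X) [IsFiniteMeasure μ]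
    {U : Set X} (hU : MeasurableSet U) (p E : Set X) :
    μ.real (p ∩ U ∩ E) + μ.real ((p \ U) ∩ E) = μ.real (p ∩ E) := by
  rw [← mu_split μ (p ∩ E) U hU]
  congr 2 <;> ext x <;> simp only [mem_inter_iff, mem_sdiff] <;> tauto

lemma restrict_null {X : Type*} [MeasurableSpace X] (μ : Measure X)
    {D A K : Set X} (hD : MeasurableSet D) (hDA : D ⊆ A) :
    (μ.restrict (K \ A)).real D = 0 := by
  rw [measureReal_restrict_apply hD]
  have : D ∩ (K \ A) = ∅ := by
    ext x; simp only [mem_inter_iff, mem_sdiff, mem_empty_iff_false]; grind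
  simp [this]

lemma restrict_atomless {X : Type*} [MeasurableSpace X] (μ : Measure X) (hcont : ∀ x : X, μ {x} = 0)
    (E : Set X) (x : X) : μ.restrict E {x} = 0 :=
  le_antisymm ((Measure.restrict_apply_le E {x}).trans (hcont x).le) bot_le

/-- A subset of `q` has the trace of `p ∩ U` on `A` once it contains `p ∩ U ∩ A` and avoids
`(p \ U) ∩ A`. -/
lemma trace_eq {X : Type*} {p q U A s : Set X} (hpq : p ∩ A = q ∩ A) (h₁ : p ∩ U ∩ A ⊆ s)
    (h₂ : s ⊆ q) (h₃ : ∀ x ∈ s, x ∉ (p \ U) ∩ A) : s ∩ A = p ∩ U ∩ A := by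
  refine Subset.antisymm (fun x hx => ?_) fun x hx => ⟨h₁ hx, hx.2⟩
  have hxp : x ∈ p := (hpq.symm.subset ⟨h₂ hx.1, hx.2⟩).1
  refine ⟨⟨hxp, ?_⟩, hx.2⟩
  by_contra hU
  exact h₃ x hx.1 ⟨⟨hxp, hU⟩, hx.2⟩

lemma trace_compl {X : Type*} {p q U A s : Set X} (hpq : p ∩ A = q ∩ A)
    (h : s ∩ A = p ∩ U ∩ A) : (q \ s) ∩ A = (p \ U) ∩ A := by
  ext x
  have a1 := Set.ext_iff.1 hpq x
  have a2 := Set.ext_iff.1 h x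
  simp only [mem_inter_iff, mem_sdiff] at a1 a2 ⊢
  tauto

/-- `extend_clopen` for a split `p = (p ∩ U) ∪ (p \ U)`: as `D₁` and `D₂` contain the two parts of
the trace on `A`, the resulting split of `q` copies both the measures and the traces. -/
lemma extend_trace {X : Type*} [MetricSpace X] [CompactSpace X] [TotallyDisconnectedSpace X]
    [MeasurableSpace X] [BorelSpace X] (μ : Measure X) [IsFiniteMeasure μ]
    (hsc : ∀ U V : Set X, IsClopen U → IsClopen V → μ.real U < μ.real V →
      ∃ W, W ⊆ V ∧ IsClopen W ∧ μ.real W = μ.real U)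
    {A p q U D₁ D₂ : Set X} (hp : IsClopen p) (hq : IsClopen q) (hm : μ.real p = μ.real q)
    (hpqA : p ∩ A = q ∩ A) (hU : IsClopen U)
    (hd₁ : p ∩ U ∩ A ⊆ D₁) (hd₂ : (p \ U) ∩ A ⊆ D₂) (hc₁ : IsClosed D₁) (hc₂ : IsClosed D₂)
    (hdisj : Disjoint D₁ D₂) (hs₁ : D₁ ⊆ q) (hs₂ : D₂ ⊆ q) (hl₁ : μ.real D₁ < μ.real (p ∩ U))
    (hl₂ : μ.real D₂ < μ.real (p \ U)) :
    ∃ q₁ : Set X, IsClopen q₁ ∧ D₁ ⊆ q₁ ∧ q₁ ⊆ q ∧ Disjoint q₁ D₂ ∧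
      μ.real (p ∩ U) = μ.real q₁ ∧ μ.real (p \ U) = μ.real (q \ q₁) ∧
      p ∩ U ∩ A = q₁ ∩ A ∧ (p \ U) ∩ A = (q \ q₁) ∩ A := by
  have hsum := mu_split μ p U hU.isOpen.measurableSet
  obtain ⟨q₁, k1, k2, k3, k4, k5⟩ := extend_clopen μ hsc (hp.inter hU) hq
    (a₂ := μ.real (p \ U)) (by linarith) hc₁ hc₂ hdisj hs₁ hs₂ hl₁ hl₂
  have e := mu_split μ q q₁ k1.isOpen.measurableSet
  rw [inter_eq_self_of_subset_right k3] at e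
  have ht : q₁ ∩ A = p ∩ U ∩ A := trace_eq hpqA (hd₁.trans k2) k3
    fun x hx hx' => Set.disjoint_left.1 k4 hx (hd₂ hx')
  exact ⟨q₁, k1, k2, k3, k4, k5.symm, by linarith, ht.symm, (trace_compl hpqA ht).symm⟩

/-- Every clopen split of the source cell can be mirrored in the target cell. The target is cut so
that each half has enough of `K \ A` for the part of `C \ A` in its source half, while the part of
`K` reserved for a half stays smaller than that half. -/
lemma forward {X : Type*} [MetricSpace X] [CompactSpace X] [TotallyDisconnectedSpace X]
    [MeasurableSpace X] [BorelSpace X] (μ : Measure X) [IsFiniteMeasure μ]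
    (hcont : ∀ x : X, μ {x} = 0)
    (hsc : ∀ U V : Set X, IsClopen U → IsClopen V → μ.real U < μ.real V →
      ∃ W, W ⊆ V ∧ IsClopen W ∧ μ.real W = μ.real U)
    {A C K : Set X} (hA : IsClosed A) (hK : IsClosed K)
    (hAC : A ⊆ C) (hAK : A ⊆ K)
    (hnd : ∀ V : Set X, IsClopen V → V.Nonempty → μ.real (V ∩ C) < μ.real V)
    {p q : Set X} (hp : IsClopen p) (hq : IsClopen q) (h : Matched μ A C K p q)
    {U : Set X} (hU : IsClopen U) :
    ∃ q₁ : Set X, IsClopen q₁ ∧ q₁ ⊆ q ∧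
      Matched μ A C K (p ∩ U) q₁ ∧ Matched μ A C K (p \ U) (q \ q₁) := by
  have hAm := hA.measurableSet
  have hUm := hU.isOpen.measurableSet
  -- The halves are assumed nonempty below, since strict inequalities of measures are needed.
  rcases (p ∩ U).eq_empty_or_nonempty with he | hne₁
  · refine ⟨∅, isClopen_empty, empty_subset _, ?_, ?_⟩
    · rw [he]; exact ⟨rfl, rfl, Or.inl (by simp)⟩
    · have : p \ U = p := by rw [sdiff_eq_left, disjoint_iff_inter_eq_empty]; exact he
      rw [this, sdiff_empty]; exact h
  rcases (p \ U).eq_empty_or_nonempty with he | hne₂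
  · refine ⟨q, hq, Subset.rfl, ?_, ?_⟩
    · rw [inter_eq_self_of_subset_left (sdiff_eq_empty.1 he)]; exact h
    · rw [he, sdiff_self]; exact ⟨rfl, rfl, Or.inl (by simp)⟩
  obtain ⟨hm, hpqA, hor⟩ := h
  have hnd₁ := hnd _ (hp.inter hU) hne₁
  have hnd₂ := hnd _ (hp.diff hU) hne₂
  rw [mu_parts μ hAm hAC] at hnd₁ hnd₂
  have hsum := mu_split μ p U hUm
  have hA₁ : IsClosed (p ∩ U ∩ A) := (hp.inter hU).isClosed.inter hA
  have hA₂ : IsClosed ((p \ U) ∩ A) := (hp.diff hU).isClosed.inter hA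
  have hAq : ∀ x ∈ A, x ∈ p ↔ x ∈ q := fun x hx => by
    have := Set.ext_iff.1 hpqA x
    simpa [hx] using this
  have aux := fun D₁ D₂ => extend_trace μ hsc (A := A) (D₁ := D₁) (D₂ := D₂) hp hq hm hpqA hU
  rcases hor with hE | hlt
  · obtain ⟨q₁, k1, -, k3, -, k5, k6, k7, k8⟩ := aux (p ∩ U ∩ A) ((p \ U) ∩ A) Subset.rfl
      Subset.rfl hA₁ hA₂
      (Set.disjoint_left.2 fun x hx hx' => hx'.1.2 hx.1.2)
      (fun x hx => (hAq x hx.2).1 hx.1.1) (fun x hx => (hAq x hx.2).1 hx.1.1)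
      (by linarith [measureReal_nonneg (μ := μ) (s := p ∩ U ∩ (C \ A))])
      (by linarith [measureReal_nonneg (μ := μ) (s := (p \ U) ∩ (C \ A))])
    refine ⟨q₁, k1, k3, ⟨k5, k7, Or.inl ?_⟩, ⟨k6, k8, Or.inl ?_⟩⟩
    · exact subset_empty_iff.1 (hE ▸ inter_subset_inter_left _ inter_subset_left)
    · exact subset_empty_iff.1 (hE ▸ inter_subset_inter_left _ sdiff_subset)
  · have hc := mu_cut μ hUm p (C \ A)
    have hc₁ := measureReal_nonneg (μ := μ) (s := p ∩ U ∩ (C \ A))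
    have hc₂ := measureReal_nonneg (μ := μ) (s := (p \ U) ∩ (C \ A))
    set c₁ := μ.real (p ∩ U ∩ (C \ A)) with hc₁def
    set c₂ := μ.real ((p \ U) ∩ (C \ A)) with hc₂def
    set k := μ.real (q ∩ (K \ A)) with hk
    -- Measuring with `ν` counts only the room in `K \ A`. The sets `n₁`, `n₂` are small disjoint
    -- neighbourhoods of the two parts of the trace on `A`.
    set ν := μ.restrict (K \ A) with hν
    have hνr : ∀ s : Set X, IsClopen s → ν.real s = μ.real (s ∩ (K \ A)) := fun s hs =>
      measureReal_restrict_apply hs.isOpen.measurableSet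
    obtain ⟨n₁, hn₁, hAn₁, hn₁q, hn₁m⟩ := clopen_nbhd ν hA₁ (hq.isOpen.inter hA₂.isOpen_compl)
      (fun x hx => ⟨(hAq x hx.2).1 hx.1.1, fun hx' => hx'.1.2 hx.1.2⟩)
      (m := min (μ.real (p ∩ U) - μ.real (p ∩ U ∩ A)) (k - c₂))
      (by rw [hν, restrict_null μ hA₁.measurableSet inter_subset_right, lt_min_iff]
          constructor <;> linarith)
    obtain ⟨n₂, hn₂, hAn₂, hn₂q, hn₂m⟩ := clopen_nbhd ν hA₂ (hq.diff hn₁).isOpen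
      (fun x hx => ⟨(hAq x hx.2).1 hx.1.1, fun hx' => (hn₁q hx').2 hx⟩)
      (m := min (μ.real (p \ U) - μ.real ((p \ U) ∩ A)) (k - c₁))
      (by rw [hν, restrict_null μ hA₂.measurableSet inter_subset_right, lt_min_iff]
          constructor <;> linarith)
    rw [lt_min_iff] at hn₂m
    have e1 := mu_split ν q n₂ hn₂.isOpen.measurableSet
    rw [inter_eq_self_of_subset_right (fun x hx => (hn₂q hx).1), hνr q hq] at e1
    -- `s` holds more than `c₁` of the room, but leaves more than `c₂` for `t`, and `s ∩ K` fits
    -- into a set of measure `μ (p ∩ U)`.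
    obtain ⟨s, hs, hns, hsq, hsc₁, hsm⟩ := exists_between_clopen ν (restrict_atomless μ hcont _)
      hn₁ (hq.diff hn₂) (fun x hx => ⟨(hn₁q hx).1, fun hx' => (hn₂q hx').2 hx⟩)
      (α := c₁) (β := min (μ.real (p ∩ U) - μ.real (p ∩ U ∩ A)) (k - c₂))
      (by rw [lt_min_iff]; constructor <;> linarith) hn₁m (by linarith)
    rw [lt_min_iff] at hsm
    have e2 := mu_split ν q s hs.isOpen.measurableSet
    rw [inter_eq_self_of_subset_right (fun x hx => (hsq hx).1), hνr q hq] at e2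
    obtain ⟨t, ht, hnt, htq, htc₂, htm⟩ := exists_between_clopen ν (restrict_atomless μ hcont _)
      hn₂ (hq.diff hs) (fun x hx => ⟨(hn₂q hx).1, fun hx' => (hsq hx').2 hx⟩)
      (α := c₂) (β := μ.real (p \ U) - μ.real ((p \ U) ∩ A))
      (by linarith) hn₂m.1 (by linarith)
    rw [hνr s hs] at hsc₁ hsm
    rw [hνr t ht] at htc₂ htm
    have hsA : s ∩ A = p ∩ U ∩ A := trace_eq hpqA (hAn₁.trans hns) (hsq.trans sdiff_subset)
      fun x hx hx' => (hsq hx).2 (hAn₂ hx')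
    have htA : t ∩ A = (p \ U) ∩ A := trace_eq (U := Uᶜ) hpqA (hAn₂.trans hnt)
      (htq.trans sdiff_subset)
      fun x hx hx' => (htq hx).2 (hns (hAn₁ ⟨⟨hx'.1.1, not_not.1 hx'.1.2⟩, hx'.2⟩))
    -- The part `s ∩ K` is forced into `q₁` and `t ∩ K` into its complement.
    obtain ⟨q₁, k1, k2, k3, k4, k5, k6, k7, k8⟩ := aux (s ∩ K) (t ∩ K)
      (hsA ▸ inter_subset_inter_right _ hAK) (htA ▸ inter_subset_inter_right _ hAK)
      (hs.isClosed.inter hK) (ht.isClosed.inter hK)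
      (Set.disjoint_left.2 fun x hx hx' => (htq hx'.1).2 hx.1)
      (fun x hx => (hsq hx.1).1) (fun x hx => (htq hx.1).1)
      (by rw [mu_parts μ hAm hAK, hsA]; linarith) (by rw [mu_parts μ hAm hAK, htA]; linarith)
    refine ⟨q₁, k1, k3, ⟨k5, k7, Or.inr (hsc₁.trans_le (measureReal_mono ?_))⟩,
      ⟨k6, k8, Or.inr (htc₂.trans_le (measureReal_mono ?_))⟩⟩
    · exact fun x hx => ⟨k2 ⟨hx.1, hx.2.1⟩, hx.2⟩
    · exact fun x hx => ⟨⟨(htq hx.1).1, fun hx' => Set.disjoint_left.1 k4 hx' ⟨hx.1, hx.2.1⟩⟩, hx.2⟩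

/-- Every clopen split of the target cell can be mirrored in the source cell, by dividing
`p ∩ (C \ A)` according to the room available in the two halves of `q`. If a half has no room, it
misses `A` because `K \ A` charges every clopen set meeting `A`; all of `p ∩ C` then goes to the
other half. -/
lemma backward {X : Type*} [MetricSpace X] [CompactSpace X] [TotallyDisconnectedSpace X]
    [MeasurableSpace X] [BorelSpace X] (μ : Measure X) [IsFiniteMeasure μ]
    (hcont : ∀ x : X, μ {x} = 0)
    (hsc : ∀ U V : Set X, IsClopen U → IsClopen V → μ.real U < μ.real V →
      ∃ W, W ⊆ V ∧ IsClopen W ∧ μ.real W = μ.real U)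
    {A C K : Set X} (hA : IsClosed A) (hC : IsClosed C)
    (hAC : A ⊆ C) (hAK : A ⊆ K)
    (hnd : ∀ V : Set X, IsClopen V → V.Nonempty → μ.real (V ∩ C) < μ.real V)
    (hacc : ∀ V : Set X, IsClopen V → (V ∩ A).Nonempty → 0 < μ.real (V ∩ (K \ A)))
    {p q : Set X} (hp : IsClopen p) (hq : IsClopen q) (h : Matched μ A C K p q)
    {V : Set X} (hV : IsClopen V) :
    ∃ p₁ : Set X, IsClopen p₁ ∧ p₁ ⊆ p ∧
      Matched μ A C K p₁ (q ∩ V) ∧ Matched μ A C K (p \ p₁) (q \ V) := by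
  have hAm := hA.measurableSet
  have hVm := hV.isOpen.measurableSet
  -- As in `forward`, empty halves are treated apart.
  rcases (q ∩ V).eq_empty_or_nonempty with he | hne₁
  · refine ⟨∅, isClopen_empty, empty_subset _, ?_, ?_⟩
    · rw [he]; exact ⟨rfl, rfl, Or.inl (by simp)⟩
    · have : q \ V = q := by rw [sdiff_eq_left, disjoint_iff_inter_eq_empty]; exact he
      rw [this, sdiff_empty]; exact h
  rcases (q \ V).eq_empty_or_nonempty with he | hne₂
  · refine ⟨p, hp, Subset.rfl, ?_, ?_⟩
    · rw [inter_eq_self_of_subset_left (sdiff_eq_empty.1 he)]; exact h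
    · rw [he, sdiff_self]; exact ⟨rfl, rfl, Or.inl (by simp)⟩
  obtain ⟨hm, hpqA, hor⟩ := h
  have hnd₁ := hnd _ (hq.inter hV) hne₁
  have hnd₂ := hnd _ (hq.diff hV) hne₂
  rw [mu_parts μ hAm hAC] at hnd₁ hnd₂
  have hn₁ := measureReal_nonneg (μ := μ) (s := q ∩ V ∩ (C \ A))
  have hn₂ := measureReal_nonneg (μ := μ) (s := (q \ V) ∩ (C \ A))
  have hn₃ := measureReal_nonneg (μ := μ) (s := q ∩ V ∩ A)
  have hn₄ := measureReal_nonneg (μ := μ) (s := (q \ V) ∩ A)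
  have hsum := mu_split μ q V hVm
  have hA₁ : IsClosed (q ∩ V ∩ A) := (hq.inter hV).isClosed.inter hA
  have hA₂ : IsClosed ((q \ V) ∩ A) := (hq.diff hV).isClosed.inter hA
  have hAq : ∀ x ∈ A, x ∈ p ↔ x ∈ q := fun x hx => by
    have := Set.ext_iff.1 hpqA x
    simpa [hx] using this
  have aux := fun D₁ D₂ =>
    extend_trace μ hsc (A := A) (D₁ := D₁) (D₂ := D₂) hq hp hm.symm hpqA.symm hV
  rcases hor with hE | hlt
  · obtain ⟨p₁, k1, -, k3, -, k5, k6, k7, k8⟩ := aux (q ∩ V ∩ A) ((q \ V) ∩ A) Subset.rfl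
      Subset.rfl hA₁ hA₂
      (Set.disjoint_left.2 fun x hx hx' => hx'.1.2 hx.1.2)
      (fun x hx => (hAq x hx.2).2 hx.1.1) (fun x hx => (hAq x hx.2).2 hx.1.1)
      (by linarith) (by linarith)
    refine ⟨p₁, k1, k3, ⟨k5.symm, k7.symm, Or.inl ?_⟩, ⟨k6.symm, k8.symm, Or.inl ?_⟩⟩
    · exact subset_empty_iff.1 (hE ▸ inter_subset_inter_left _ k3)
    · exact subset_empty_iff.1 (hE ▸ inter_subset_inter_left _ sdiff_subset)
  have hk := mu_cut μ hVm q (K \ A)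
  have hcutA := mu_cut μ hVm q A
  have hpC := mu_parts μ hAm hAC p
  rw [hpqA] at hpC
  have hq₁K := mu_parts μ hAm hAK (q ∩ V)
  have hq₂K := mu_parts μ hAm hAK (q \ V)
  have hq₁K' : μ.real (q ∩ V ∩ K) ≤ μ.real (q ∩ V) := measureReal_mono inter_subset_left
  have hq₂K' : μ.real ((q \ V) ∩ K) ≤ μ.real (q \ V) := measureReal_mono inter_subset_left
  have hk₁ := measureReal_nonneg (μ := μ) (s := q ∩ V ∩ (K \ A))
  have hk₂ := measureReal_nonneg (μ := μ) (s := (q \ V) ∩ (K \ A))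
  have hacc₁ : μ.real (q ∩ V ∩ (K \ A)) ≤ 0 → q ∩ V ∩ A = ∅ := fun h0 =>
    not_nonempty_iff_eq_empty.1 fun hne => (hacc _ (hq.inter hV) hne).not_ge h0
  have hacc₂ : μ.real ((q \ V) ∩ (K \ A)) ≤ 0 → (q \ V) ∩ A = ∅ := fun h0 =>
    not_nonempty_iff_eq_empty.1 fun hne => (hacc _ (hq.diff hV) hne).not_ge h0
  set c := μ.real (p ∩ (C \ A)) with hc
  set k₁ := μ.real (q ∩ V ∩ (K \ A)) with hk₁def
  set k₂ := μ.real ((q \ V) ∩ (K \ A)) with hk₂def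
  -- No room in `q ∩ V`: this half misses `A`, and all of `p ∩ C` is kept out of `p₁`.
  rcases le_or_gt k₁ 0 with h0 | hpos₁
  · have hAe := hacc₁ h0
    obtain ⟨p₁, k1, -, k3, k4, k5, k6, k7, k8⟩ := aux ∅ (p ∩ C) hAe.subset
      (fun x hx => ⟨(hAq x hx.2).2 hx.1.1, hAC hx.2⟩) isClosed_empty (hp.isClosed.inter hC)
      (empty_disjoint _) (empty_subset _) inter_subset_left (by simp; linarith)
      (by rw [hAe, measureReal_empty] at hcutA; linarith)
    refine ⟨p₁, k1, k3, ⟨k5.symm, k7.symm, Or.inl ?_⟩, ⟨k6.symm, k8.symm, Or.inr ?_⟩⟩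
    · exact eq_empty_of_forall_notMem fun x hx =>
        Set.disjoint_left.1 k4 hx.1 ⟨k3 hx.1, hx.2.1⟩
    · have : μ.real ((p \ p₁) ∩ (C \ A)) ≤ c :=
        measureReal_mono (inter_subset_inter_left _ sdiff_subset)
      linarith
  -- No room in `q \ V`: all of `p ∩ C` is put into `p₁`.
  rcases le_or_gt k₂ 0 with h0 | hpos₂
  · have hAe := hacc₂ h0
    obtain ⟨p₁, k1, k2, k3, k4, k5, k6, k7, k8⟩ := aux (p ∩ C) ∅
      (fun x hx => ⟨(hAq x hx.2).2 hx.1.1, hAC hx.2⟩) hAe.subset (hp.isClosed.inter hC)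
      isClosed_empty (disjoint_empty _) inter_subset_left (empty_subset _)
      (by rw [hAe, measureReal_empty] at hcutA; linarith) (by simp; linarith)
    refine ⟨p₁, k1, k3, ⟨k5.symm, k7.symm, Or.inr ?_⟩, ⟨k6.symm, k8.symm, Or.inl ?_⟩⟩
    · have : μ.real (p₁ ∩ (C \ A)) ≤ c := measureReal_mono (inter_subset_inter_left _ k3)
      linarith
    · exact eq_empty_of_forall_notMem fun x hx => hx.1.2 (k2 ⟨hx.1.1, hx.2.1⟩)
  -- Both halves have room. As `c < k₁ + k₂`, a clopen `s` can take between `c - k₂` and `k₁` of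
  -- `p ∩ (C \ A)`, leaving less than `k₂`.
  set ν := μ.restrict (C \ A) with hν
  have hνr : ∀ s : Set X, IsClopen s → ν.real s = μ.real (s ∩ (C \ A)) := fun s hs =>
    measureReal_restrict_apply hs.isOpen.measurableSet
  obtain ⟨n₁, hn₁, hAn₁, hn₁p, hn₁m⟩ := clopen_nbhd ν hA₁ (hp.isOpen.inter hA₂.isOpen_compl)
    (fun x hx => ⟨(hAq x hx.2).2 hx.1.1, fun hx' => hx'.1.2 hx.1.2⟩) (m := k₁)
    (by rwa [hν, restrict_null μ hA₁.measurableSet inter_subset_right])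
  obtain ⟨n₂, hn₂, hAn₂, hn₂p, hn₂m⟩ := clopen_nbhd ν hA₂ (hp.diff hn₁).isOpen
    (fun x hx => ⟨(hAq x hx.2).2 hx.1.1, fun hx' => (hn₁p hx').2 hx⟩) (m := k₂)
    (by rwa [hν, restrict_null μ hA₂.measurableSet inter_subset_right])
  have e1 := mu_split ν p n₂ hn₂.isOpen.measurableSet
  rw [inter_eq_self_of_subset_right (fun x hx => (hn₂p hx).1), hνr p hp] at e1
  obtain ⟨s, hs, hns, hsp, hsc₁, hsm⟩ := exists_between_clopen ν (restrict_atomless μ hcont _)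
    hn₁ (hp.diff hn₂) (fun x hx => ⟨(hn₁p hx).1, fun hx' => (hn₂p hx').2 hx⟩)
    (α := c - k₂) (β := k₁) (by linarith) hn₁m (by linarith)
  have e2 := mu_split ν p s hs.isOpen.measurableSet
  rw [inter_eq_self_of_subset_right (fun x hx => (hsp hx).1), hνr p hp, hνr _ (hp.diff hs),
    hνr s hs] at e2
  rw [hνr s hs] at hsc₁ hsm
  have hsA : s ∩ A = q ∩ V ∩ A := trace_eq hpqA.symm (hAn₁.trans hns) (hsp.trans sdiff_subset)
    fun x hx hx' => (hsp hx).2 (hAn₂ hx')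
  have htA : (p \ s) ∩ A = (q \ V) ∩ A := trace_compl hpqA.symm hsA
  obtain ⟨p₁, k1, k2, k3, k4, k5, k6, k7, k8⟩ := aux (s ∩ C) ((p \ s) ∩ C)
    (hsA ▸ inter_subset_inter_right _ hAC) (htA ▸ inter_subset_inter_right _ hAC)
    (hs.isClosed.inter hC) ((hp.diff hs).isClosed.inter hC)
    (Set.disjoint_left.2 fun x hx hx' => hx'.1.2 hx.1)
    (fun x hx => (hsp hx.1).1) (fun x hx => hx.1.1)
    (by rw [mu_parts μ hAm hAC, hsA]; linarith) (by rw [mu_parts μ hAm hAC, htA]; linarith)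
  refine ⟨p₁, k1, k3, ⟨k5.symm, k7.symm, Or.inr (lt_of_le_of_lt (measureReal_mono ?_) hsm)⟩,
    ⟨k6.symm, k8.symm, Or.inr (lt_of_le_of_lt (measureReal_mono (s₂ := (p \ s) ∩ (C \ A)) ?_) ?_)⟩⟩
  · refine fun x hx => ⟨?_, hx.2⟩
    by_contra hxs
    exact Set.disjoint_left.1 k4 hx.1 ⟨⟨k3 hx.1, hxs⟩, hx.2.1⟩
  · exact fun x hx => ⟨⟨hx.1.1, fun hxs => hx.1.2 (k2 ⟨hxs, hx.2.1⟩)⟩, hx.2⟩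
  · linarith

/-! ### Refining pairs of labelled partitions -/

open Classical in
/-- A clopen partition is encoded as the fibres of a locally constant labelling by words in
`Bool`. Prefixing the bit `x ∈ U` refines the partition by the set `U`. -/
noncomputable def addBit {X : Type*} (U : Set X) (f : X → List Bool) (x : X) : List Bool :=
  decide (x ∈ U) :: f x

lemma addBit_eq {X : Type*} {U V : Set X} {f g : X → List Bool} {x y : X}
    (h : addBit U f x = addBit V g y) : (x ∈ U ↔ y ∈ V) ∧ f x = g y := by
  simpa [addBit] using h

lemma addBit_locConst {X : Type*} [TopologicalSpace X] {U : Set X} (hU : IsClopen U)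
    {f : X → List Bool} (hf : IsLocallyConstant f) : IsLocallyConstant (addBit U f) := by
  classical
  have hd : IsLocallyConstant fun x => decide (x ∈ U) := by
    rw [IsLocallyConstant.iff_exists_open]
    intro x
    by_cases hx : x ∈ U
    · exact ⟨U, hU.isOpen, hx, fun y hy => by simp [hx, hy]⟩
    · exact ⟨Uᶜ, hU.compl.isOpen, hx, fun y hy => by
        simp only [hx, decide_false, decide_eq_false_iff_not]; exact hy⟩
  have := hd.comp₂ hf List.cons
  exact this

lemma addBit_matched {X : Type*} [MeasurableSpace X] (μ : Measure X) {A C K U V : Set X}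
    {f g : X → List Bool}
    (h : ∀ l, Matched μ A C K (f ⁻¹' {l} ∩ U) (g ⁻¹' {l} ∩ V) ∧
      Matched μ A C K (f ⁻¹' {l} \ U) (g ⁻¹' {l} \ V)) (l : List Bool) :
    Matched μ A C K (addBit U f ⁻¹' {l}) (addBit V g ⁻¹' {l}) := by
  have e : ∀ (W : Set X) (k : X → List Bool), addBit W k ⁻¹' {[]} = ∅ ∧
      (∀ l, addBit W k ⁻¹' {true :: l} = k ⁻¹' {l} ∩ W) ∧
      (∀ l, addBit W k ⁻¹' {false :: l} = k ⁻¹' {l} \ W) := by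
    intro W k
    refine ⟨?_, fun l => ?_, fun l => ?_⟩ <;> ext x <;> simp [addBit, and_comm]
  rcases l with _ | ⟨b, l⟩
  · rw [(e U f).1, (e V g).1]; exact ⟨rfl, rfl, Or.inl (by simp)⟩
  · cases b
    · rw [(e U f).2.2, (e V g).2.2]; exact (h l).2
    · rw [(e U f).2.1, (e V g).2.1]; exact (h l).1

/-- Clopen subsets `Q l` of the cells of a partition are cut out by a single clopen set. -/
lemma glue_clopen {X : Type*} [TopologicalSpace X] {g : X → List Bool} (hg : IsLocallyConstant g)
    {Q : List Bool → Set X} (hQ : ∀ l, IsClopen (Q l)) (hQg : ∀ l, Q l ⊆ g ⁻¹' {l}) :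
    ∃ V : Set X, IsClopen V ∧ (∀ l, g ⁻¹' {l} ∩ V = Q l) ∧
      ∀ l, g ⁻¹' {l} \ V = g ⁻¹' {l} \ Q l := by
  have hmem : ∀ x l, x ∈ Q l → g x = l := fun x l hx => hQg l hx
  refine ⟨⋃ l, Q l, ⟨?_, isOpen_iUnion fun l => (hQ l).isOpen⟩, fun l => ?_, fun l => ?_⟩
  · rw [← isOpen_compl_iff]
    have : (⋃ l, Q l)ᶜ = ⋃ l, (g ⁻¹' {l} \ Q l) := by
      ext x
      simp only [mem_compl_iff, mem_iUnion, not_exists, mem_sdiff, mem_preimage, mem_singleton_iff]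
      constructor
      · exact fun h => ⟨g x, rfl, h _⟩
      · rintro ⟨l, rfl, h⟩ l' hl'
        rw [← hmem x l' hl'] at hl'
        exact h hl'
    rw [this]
    exact isOpen_iUnion fun l => ((hg.isClopen_fiber l).diff (hQ l)).isOpen
  all_goals
    ext x
    simp only [mem_inter_iff, mem_iUnion, mem_sdiff, mem_preimage, mem_singleton_iff]
    constructor
  · rintro ⟨rfl, l', hl'⟩
    rwa [← hmem x l' hl'] at hl'
  · exact fun h => ⟨hmem x l h, l, h⟩
  · exact fun h => ⟨h.1, fun h' => h.2 ⟨l, h'⟩⟩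
  · rintro ⟨rfl, h⟩
    refine ⟨rfl, ?_⟩
    rintro ⟨l', hl'⟩
    rw [← hmem x l' hl'] at hl'
    exact h hl'

/-- A stage of the construction: source and target labellings whose cells with the same label are
matched. -/
structure IsPair {X : Type*} [TopologicalSpace X] [MeasurableSpace X] (μ : Measure X)
    (A C K : Set X) (s : (X → List Bool) × (X → List Bool)) : Prop where
  matched : ∀ l, Matched μ A C K (s.1 ⁻¹' {l}) (s.2 ⁻¹' {l})
  left : IsLocallyConstant s.1
  right : IsLocallyConstant s.2

/-- The back-and-forth step: both partitions of a pair can be refined until the clopen set `W` is a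
union of cells on either side. The source is split by `W` and the split mirrored by `forward`; then
the target is split by `W` and the split mirrored by `backward`. -/
lemma exists_refinement {X : Type*} [MetricSpace X] [CompactSpace X] [TotallyDisconnectedSpace X]
    [MeasurableSpace X] [BorelSpace X] (μ : Measure X) [IsFiniteMeasure μ]
    (hcont : ∀ x : X, μ {x} = 0)
    (hsc : ∀ U V : Set X, IsClopen U → IsClopen V → μ.real U < μ.real V →
      ∃ W, W ⊆ V ∧ IsClopen W ∧ μ.real W = μ.real U)
    {A C K : Set X} (hA : IsClosed A) (hC : IsClosed C) (hK : IsClosed K)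
    (hAC : A ⊆ C) (hAK : A ⊆ K)
    (hnd : ∀ V : Set X, IsClopen V → V.Nonempty → μ.real (V ∩ C) < μ.real V)
    (hacc : ∀ V : Set X, IsClopen V → (V ∩ A).Nonempty → 0 < μ.real (V ∩ (K \ A)))
    {W : Set X} (hW : IsClopen W) (s : (X → List Bool) × (X → List Bool))
    (hs : IsPair μ A C K s) :
    ∃ t : (X → List Bool) × (X → List Bool), IsPair μ A C K t ∧
      (∀ x y, t.1 x = t.2 y → s.1 x = s.2 y) ∧
      (∀ x y, t.1 x = t.1 y → (x ∈ W ↔ y ∈ W)) ∧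
      (∀ x y, t.2 x = t.2 y → (x ∈ W ↔ y ∈ W)) := by
  obtain ⟨f, g⟩ := s
  obtain ⟨hm, hf, hg⟩ := hs
  dsimp only at hf hg hm
  choose Q hQ hQg hQ₁ hQ₂ using fun l => forward μ hcont hsc hA hK hAC hAK hnd
    (hf.isClopen_fiber l) (hg.isClopen_fiber l) (hm l) hW
  obtain ⟨V, hV, hV₁, hV₂⟩ := glue_clopen hg hQ hQg
  have hf' := addBit_locConst hW hf
  have hg' := addBit_locConst hV hg
  have hm' := addBit_matched μ (A := A) (C := C) (K := K) (U := W) (V := V) (f := f) (g := g)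
    fun l => by rw [hV₁, hV₂]; exact ⟨hQ₁ l, hQ₂ l⟩
  choose P hP hPf hP₁ hP₂ using fun l => backward μ hcont hsc hA hC hAC hAK hnd hacc
    (hf'.isClopen_fiber l) (hg'.isClopen_fiber l) (hm' l) hW
  obtain ⟨U, hU, hU₁, hU₂⟩ := glue_clopen hf' hP hPf
  have hm'' := addBit_matched μ (A := A) (C := C) (K := K) (U := U) (V := W) (f := addBit W f)
    (g := addBit V g) fun l => by rw [hU₁, hU₂]; exact ⟨hP₁ l, hP₂ l⟩
  refine ⟨(addBit U (addBit W f), addBit W (addBit V g)),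
    ⟨hm'', addBit_locConst hU hf', addBit_locConst hW hg'⟩, ?_, ?_, ?_⟩
  · exact fun x y h => (addBit_eq (addBit_eq h).2).2
  · exact fun x y h => (addBit_eq (addBit_eq h).2).1
  · exact fun x y h => (addBit_eq h).1

/-! ### The homeomorphism determined by nested labellings -/

/-- The cells labelled like `x` form a decreasing sequence of nonempty compact sets. -/
lemma exists_common_label {X : Type*} [TopologicalSpace X] [CompactSpace X]
    {f g : ℕ → X → List Bool} (hg : ∀ n, IsLocallyConstant (g n))
    (hne : ∀ n x, ∃ y, g n y = f n x)
    (hnest : ∀ n x y, g (n + 1) y = f (n + 1) x → g n y = f n x) (x : X) :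
    ∃ y, ∀ n, g n y = f n x := by
  obtain ⟨y, hy⟩ := IsCompact.nonempty_iInter_of_sequence_nonempty_isCompact_isClosed
    (fun n => {y | g n y = f n x}) (fun n y hy => hnest n x y hy) (fun n => hne n x)
    ((hg 0).isClosed_fiber _).isCompact (fun n => (hg n).isClosed_fiber _)
  exact ⟨y, fun n => mem_iInter.1 hy n⟩

lemma continuous_of_labels {X : Type*} [TopologicalSpace X] [T2Space X] [CompactSpace X]
    [TotallyDisconnectedSpace X] {e : ℕ → Set X} (he : ∀ W, IsClopen W → ∃ n, e n = W)
    {f g : ℕ → X → List Bool} (hf : ∀ n, IsLocallyConstant (f n))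
    (hsep : ∀ n x y, g (n + 1) x = g (n + 1) y → (x ∈ e n ↔ y ∈ e n))
    {h : X → X} (hh : ∀ x n, g n (h x) = f n x) : Continuous h := by
  rw [isTopologicalBasis_isClopen.continuous_iff]
  intro W hW
  obtain ⟨n, rfl⟩ := he W hW
  rw [isOpen_iff_forall_mem_open]
  intro x hx
  refine ⟨{x' | f (n + 1) x' = f (n + 1) x}, fun x' hx' => ?_, (hf _).isOpen_fiber _, rfl⟩
  refine (hsep n (h x') (h x) ?_).2 hx
  rw [hh, hh]
  exact hx'

lemma eq_of_labels {X : Type*} [TopologicalSpace X] [T2Space X] [CompactSpace X]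
    [TotallyDisconnectedSpace X] {e : ℕ → Set X} (he : ∀ W, IsClopen W → ∃ n, e n = W)
    {f : ℕ → X → List Bool}
    (hsep : ∀ n x y, f (n + 1) x = f (n + 1) y → (x ∈ e n ↔ y ∈ e n))
    {x y : X} (h : ∀ n, f n x = f n y) : x = y := by
  by_contra hne
  obtain ⟨W, hW, hx, hy⟩ := exists_isClopen_of_totally_separated hne
  obtain ⟨n, rfl⟩ := he W hW
  exact hy ((hsep n x y (h _)).1 hx)

/-- Two nested sequences of labellings with the same labels, both eventually separating the points,
determine a homeomorphism taking each source cell onto the target cell with the same label. -/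
lemma exists_homeo {X : Type*} [TopologicalSpace X] [T2Space X] [CompactSpace X]
    [TotallyDisconnectedSpace X] {e : ℕ → Set X} (he : ∀ W, IsClopen W → ∃ n, e n = W)
    {f g : ℕ → X → List Bool}
    (hf : ∀ n, IsLocallyConstant (f n)) (hg : ∀ n, IsLocallyConstant (g n))
    (hne₁ : ∀ n x, ∃ y, g n y = f n x) (hne₂ : ∀ n y, ∃ x, f n x = g n y)
    (hnest : ∀ n x y, f (n + 1) x = g (n + 1) y → f n x = g n y)
    (hsepf : ∀ n x y, f (n + 1) x = f (n + 1) y → (x ∈ e n ↔ y ∈ e n))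
    (hsepg : ∀ n x y, g (n + 1) x = g (n + 1) y → (x ∈ e n ↔ y ∈ e n)) :
    ∃ h : X ≃ₜ X, ∀ x n, g n (h x) = f n x := by
  choose h hh using exists_common_label hg hne₁ fun n x y hxy => (hnest n x y hxy.symm).symm
  choose k hk using exists_common_label hf hne₂ fun n x y hxy => hnest n y x hxy
  refine ⟨⟨⟨h, k, fun x => ?_, fun y => ?_⟩, continuous_of_labels he hf hsepg hh,
    continuous_of_labels he hg hsepf hk⟩, hh⟩
  · exact eq_of_labels he hsepf fun n => by rw [hk, hh]
  · exact eq_of_labels he hsepg fun n => by rw [hh, hk]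

lemma measure_preimage_eq {X : Type*} [TopologicalSpace X] [MeasurableSpace X] [BorelSpace X]
    (μ : Measure X) {f g : X → List Bool} (hf : IsLocallyConstant f) (hg : IsLocallyConstant g)
    (h : ∀ l, μ (f ⁻¹' {l}) = μ (g ⁻¹' {l})) (T : Set (List Bool)) :
    μ (f ⁻¹' T) = μ (g ⁻¹' T) := by
  have key : ∀ k : X → List Bool, IsLocallyConstant k →
      μ (k ⁻¹' T) = ∑' l : T, μ (k ⁻¹' {(l : List Bool)}) := by
    intro k hk
    rw [← biUnion_preimage_singleton, measure_biUnion T.to_countable]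
    · intro a _ b _ hab
      exact (Set.disjoint_singleton.2 hab).preimage k
    · exact fun l _ => (hk.isOpen_fiber l).measurableSet
  rw [key f hf, key g hg]
  exact tsum_congr fun l => h l

/-- A homeomorphism that respects labellings whose cells have equal measures preserves the measure
of clopen sets, and these form a π-system generating the Borel sets. -/
lemma preserves {X : Type*} [MetricSpace X] [CompactSpace X] [TotallyDisconnectedSpace X]
    [MeasurableSpace X] [BorelSpace X] (μ : Measure X) [IsFiniteMeasure μ]
    {e : ℕ → Set X} (he : ∀ W, IsClopen W → ∃ n, e n = W) {f g : ℕ → X → List Bool}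
    (hf : ∀ n, IsLocallyConstant (f n)) (hg : ∀ n, IsLocallyConstant (g n))
    (hμ : ∀ n l, μ (f n ⁻¹' {l}) = μ (g n ⁻¹' {l}))
    (hsepg : ∀ n x y, g (n + 1) x = g (n + 1) y → (x ∈ e n ↔ y ∈ e n))
    (h : X ≃ₜ X) (hh : ∀ x n, g n (h x) = f n x) (S : Set X) (hS : MeasurableSet S) :
    μ (h '' S) = μ S := by
  have hmap : μ.map h = μ := by
    have hgen : ‹MeasurableSpace X› = MeasurableSpace.generateFrom {s : Set X | IsClopen s} := by
      rw [BorelSpace.measurable_eq (α := X)]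
      exact isTopologicalBasis_isClopen.borel_eq_generateFrom
    refine ext_of_generate_finite _ hgen (fun s hs t ht _ => IsClopen.inter hs ht) ?_ ?_
    · intro W hW
      rw [Measure.map_apply h.continuous.measurable (IsClopen.isOpen hW).measurableSet]
      obtain ⟨n, rfl⟩ := he W hW
      -- `e n` is a union of target cells at stage `n + 1`.
      have e1 : g (n + 1) ⁻¹' (g (n + 1) '' e n) = e n := by
        refine Subset.antisymm ?_ (subset_preimage_image _ _)
        rintro x ⟨y, hy, hxy⟩
        exact (hsepg n y x hxy).1 hy
      have e2 : f (n + 1) ⁻¹' (g (n + 1) '' e n) = h ⁻¹' e n := by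
        conv_rhs => rw [← e1]
        ext x
        simp only [mem_preimage, hh]
      rw [← e2, measure_preimage_eq μ (hf _) (hg _) (hμ _), e1]
    · rw [Measure.map_apply h.continuous.measurable MeasurableSet.univ, preimage_univ]
  have hm : MeasurableSet (h '' S) := h.measurableEmbedding.measurableSet_image.2 hS
  rw [← hmap, Measure.map_apply h.continuous.measurable hm, h.injective.preimage_image, hmap]

/-! ### The target set and the initial partition -/

lemma exists_compact_in {X : Type*} [MetricSpace X] [CompactSpace X]
    [MeasurableSpace X] [BorelSpace X] (μ : Measure X) [IsFiniteMeasure μ]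
    {B : Set X} (hB : MeasurableSet B) (hBfull : μ B = μ univ)
    {O : Set X} (hO : MeasurableSet O) {r : ℝ} (hr : 0 ≤ r) (hrO : r < μ.real O) :
    ∃ L ⊆ O ∩ B, IsCompact L ∧ r < μ.real L := by
  have hBc : μ Bᶜ = 0 := by
    rw [measure_compl hB (measure_ne_top μ B), hBfull, tsub_self]
  have hOB : μ (O ∩ B) = μ O := measure_inter_conull hBc
  have hlt : ENNReal.ofReal r < μ (O ∩ B) := by
    rw [hOB]
    exact (ENNReal.ofReal_lt_iff_lt_toReal hr (measure_ne_top μ O)).2 hrO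
  obtain ⟨L, hL, hLc, hlt'⟩ := (hO.inter hB).exists_lt_isCompact hlt
  exact ⟨L, hL, hLc, (ENNReal.ofReal_lt_iff_lt_toReal hr (measure_ne_top μ L)).1 hlt'⟩

/-- Infinitely many closed sets in shrinking neighbourhoods of `A` can accumulate only on `A`, so
their union with `A` and another closed set is closed. -/
lemma isClosed_accumulate {X : Type*} [MetricSpace X] {A K₀ : Set X} (hA : IsClosed A)
    (hK₀ : IsClosed K₀) {L : ℕ → Set X} (hL : ∀ n, IsClosed (L n))
    (hLA : ∀ n, L n ⊆ Metric.thickening (1 / ((n : ℝ) + 1)) A) :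
    IsClosed (A ∪ K₀ ∪ ⋃ n, L n) := by
  have hpos : ∀ n : ℕ, 0 < 1 / ((n : ℝ) + 1) := fun n => Nat.one_div_pos_of_nat
  have : A ∪ K₀ ∪ ⋃ n, L n = ⋂ m : ℕ, (Metric.cthickening (1 / ((m : ℝ) + 1)) A ∪
      (K₀ ∪ ⋃ n ∈ Finset.range m, L n)) := by
    ext x
    simp only [mem_union, mem_iUnion, mem_iInter, Finset.mem_range]
    constructor
    · rintro ((hx | hx) | ⟨n, hx⟩) m
      · exact Or.inl (Metric.self_subset_cthickening A hx)
      · exact Or.inr (Or.inl hx)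
      · rcases lt_or_ge n m with h | h
        · exact Or.inr (Or.inr ⟨n, h, hx⟩)
        · exact Or.inl (Metric.cthickening_mono (Nat.one_div_le_one_div h) A
            (Metric.thickening_subset_cthickening _ _ (hLA n hx)))
    · intro h
      by_contra hx
      push Not at hx
      refine hx.1.1 ?_
      rw [← hA.closure_eq, Metric.closure_eq_iInter_cthickening]
      refine mem_iInter₂.2 fun δ hδ => ?_
      obtain ⟨m, hm⟩ := exists_nat_one_div_lt hδ
      refine Metric.cthickening_mono hm.le A ?_
      rcases h m with h | h | ⟨n, -, h⟩
      · exact h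
      · exact absurd h hx.1.2
      · exact absurd h (hx.2 n)
  rw [this]
  exact isClosed_iInter fun m => Metric.isClosed_cthickening.union
    (hK₀.union (isClosed_biUnion_finset fun n _ => hL n))

/-- The set `K ⊆ B` into which `C` will be pushed. It consists of `A`, one compact set in each cell
of `f` large enough to match the cell with itself, and small compact sets near `A` that make `K \ A`
charge every clopen set meeting `A`. -/
lemma exists_target {X : Type*} [MetricSpace X] [CompactSpace X] [TotallyDisconnectedSpace X]
    [MeasurableSpace X] [BorelSpace X] (μ : Measure X) [IsFiniteMeasure μ]
    (hpos : ∀ U : Set X, IsOpen U → U.Nonempty → 0 < μ U)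
    {B : Set X} (hB : MeasurableSet B) (hBfull : μ B = μ univ) {A C : Set X}
    (hA : IsClosed A) (hAC : A ⊆ C) (hAB : A ⊆ B) (hAi : interior A = ∅)
    (hnd : ∀ V : Set X, IsClopen V → V.Nonempty → μ.real (V ∩ C) < μ.real V)
    {e : ℕ → Set X} (heo : ∀ n, IsClopen (e n)) (he : ∀ W, IsClopen W → ∃ n, e n = W)
    {f : X → List Bool} (hf : IsLocallyConstant f) :
    ∃ K : Set X, IsClosed K ∧ A ⊆ K ∧ K ⊆ B ∧
      (∀ V : Set X, IsClopen V → (V ∩ A).Nonempty → 0 < μ.real (V ∩ (K \ A))) ∧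
      ∀ l, Matched μ A C K (f ⁻¹' {l}) (f ⁻¹' {l}) := by
  have hAm := hA.measurableSet
  have h1 : ∀ n : ℕ, ∃ L : Set X, IsCompact L ∧ L ⊆ e n ∧
      L ⊆ Metric.thickening (1 / ((n : ℝ) + 1)) A ∧ L ⊆ B \ A ∧
      ((e n ∩ A).Nonempty → 0 < μ.real L) := by
    intro n
    by_cases hn : (e n ∩ A).Nonempty
    · obtain ⟨a, ha, haA⟩ := hn
      set G := e n ∩ Metric.thickening (1 / ((n : ℝ) + 1)) A with hG
      have hGo : IsOpen G := (heo n).isOpen.inter Metric.isOpen_thickening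
      have haG : a ∈ G := ⟨ha, Metric.self_subset_thickening Nat.one_div_pos_of_nat A haA⟩
      have hne : (G \ A).Nonempty := by
        rw [nonempty_iff_ne_empty, Ne, sdiff_eq_empty]
        intro h
        have := interior_maximal h hGo haG
        rw [hAi] at this
        exact this
      have hGA : IsOpen (G \ A) := hGo.sdiff hA
      obtain ⟨L, hL, hLc, hL0⟩ := exists_compact_in μ hB hBfull hGA.measurableSet le_rfl
        (ENNReal.toReal_pos (hpos _ hGA hne).ne' (measure_ne_top _ _))
      exact ⟨L, hLc, fun x hx => (hL hx).1.1.1, fun x hx => (hL hx).1.1.2,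
        fun x hx => ⟨(hL hx).2, (hL hx).1.2⟩, fun _ => hL0⟩
    · exact ⟨∅, isCompact_empty, by simp, by simp, by simp, fun h => absurd h hn⟩
  have h2 : ∀ l, ∃ M : Set X, IsCompact M ∧ M ⊆ f ⁻¹' {l} ∧ M ⊆ B \ A ∧
      ((f ⁻¹' {l}).Nonempty → μ.real (f ⁻¹' {l} ∩ (C \ A)) < μ.real M) := by
    intro l
    by_cases hl : (f ⁻¹' {l}).Nonempty
    · have hcl : IsClopen (f ⁻¹' {l}) := hf.isClopen_fiber l
      have hlt := hnd _ hcl hl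
      have e1 := mu_parts μ hAm hAC (f ⁻¹' {l})
      have e2 := mu_split μ (f ⁻¹' {l}) A hAm
      obtain ⟨M, hM, hMc, hM0⟩ := exists_compact_in μ hB hBfull
        (hcl.isOpen.sdiff hA).measurableSet
        (measureReal_nonneg (μ := μ) (s := f ⁻¹' {l} ∩ (C \ A))) (by linarith)
      exact ⟨M, hMc, fun x hx => (hM hx).1.1, fun x hx => ⟨(hM hx).2, (hM hx).1.2⟩, fun _ => hM0⟩
    · exact ⟨∅, isCompact_empty, by simp, by simp, fun h => absurd h hl⟩
  choose L hLc hLe hLt hLB hL0 using h1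
  choose M hMc hMf hMB hM0 using h2
  have hK₀ : IsCompact (⋃ l ∈ range f, M l) :=
    hf.range_finite.isCompact_biUnion fun l _ => hMc l
  refine ⟨A ∪ (⋃ l ∈ range f, M l) ∪ ⋃ n, L n,
    isClosed_accumulate hA hK₀.isClosed (fun n => (hLc n).isClosed) hLt,
    subset_union_left.trans subset_union_left, ?_, ?_, ?_⟩
  · refine union_subset (union_subset hAB (iUnion₂_subset fun l _ => ?_))
      (iUnion_subset fun n => ?_)
    · exact (hMB l).trans sdiff_subset
    · exact (hLB n).trans sdiff_subset
  · intro V hV hVA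
    obtain ⟨n, rfl⟩ := he V hV
    refine (hL0 n hVA).trans_le (measureReal_mono fun x hx => ⟨hLe n hx, ?_, (hLB n hx).2⟩)
    exact Or.inr (mem_iUnion.2 ⟨n, hx⟩)
  · refine fun l => ⟨rfl, rfl, ?_⟩
    rcases (f ⁻¹' {l}).eq_empty_or_nonempty with h | h
    · exact Or.inl (by rw [h, empty_inter])
    · refine Or.inr ((hM0 l h).trans_le
        (measureReal_mono fun x hx => ⟨hMf l hx, ?_, (hMB l hx).2⟩))
      exact Or.inl (Or.inr (mem_iUnion₂.2 ⟨l, ⟨h.some, h.some_mem⟩, hx⟩))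

/-- There is a clopen partition into cells of diameter at most `δ`. -/
lemma exists_fine_labels {X : Type*} [MetricSpace X] [CompactSpace X] [TotallyDisconnectedSpace X]
    {δ : ℝ} (hδ : 0 < δ) :
    ∃ f : X → List Bool, IsLocallyConstant f ∧ ∀ x y, f x = f y → dist x y ≤ δ := by
  choose U hU hxU hUb using fun x : X => compact_exists_isClopen_in_isOpen
    (Metric.isOpen_ball (x := x) (ε := δ / 2)) (Metric.mem_ball_self (half_pos hδ))
  obtain ⟨t, ht⟩ := isCompact_univ.elim_nhds_subcover U
    fun x _ => (hU x).isOpen.mem_nhds (hxU x)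
  have key : ∀ L : List X, ∃ f : X → List Bool, IsLocallyConstant f ∧
      ∀ x y, f x = f y → ∀ z ∈ L, (x ∈ U z ↔ y ∈ U z) := by
    intro L
    induction L with
    | nil => exact ⟨fun _ => [], IsLocallyConstant.const _, by simp⟩
    | cons z L ih =>
      obtain ⟨f, hf, hfL⟩ := ih
      refine ⟨addBit (U z) f, addBit_locConst (hU z) hf, fun x y hxy w hw => ?_⟩
      rcases List.mem_cons.1 hw with rfl | hw
      · exact (addBit_eq hxy).1
      · exact hfL x y (addBit_eq hxy).2 w hw
  obtain ⟨f, hf, hfL⟩ := key t.toList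
  refine ⟨f, hf, fun x y hxy => ?_⟩
  obtain ⟨z, hz, hxz⟩ := mem_iUnion₂.1 (ht.2 (mem_univ x))
  have hyz := (hfL x y hxy z (Finset.mem_toList.2 hz)).1 hxz
  have h1 := Metric.mem_ball.1 (hUb z hxz)
  have h2 := Metric.mem_ball'.1 (hUb z hyz)
  linarith [dist_triangle x z y]

/-- Small perturbation fixing `A` and pushing `C` into a full-measure Borel set `B`. -/
theorem stmt7 {X : Type*} [MetricSpace X] [CompactSpace X]
    [TotallyDisconnectedSpace X]
    [MeasurableSpace X] [BorelSpace X]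
    (μ : Measure X) [IsFiniteMeasure μ]
    (hperf : ∀ x : X, ¬ IsOpen ({x} : Set X))
    (hcont : ∀ x : X, μ {x} = 0)
    (hpos : ∀ U : Set X, IsOpen U → U.Nonempty → 0 < μ U)
    (hsc : ∀ U V : Set X, IsClopen U → IsClopen V → μ U < μ V →
      ∃ W, W ⊆ V ∧ IsClopen W ∧ μ W = μ U)
    (B : Set X) (hB : MeasurableSet B) (hBfull : μ B = μ Set.univ)
    (A C : Set X) (hAC : A ⊆ C)
    (hA : IsClosed A) (hAnd : IsNowhereDense A)
    (hC : IsClosed C) (hCnd : IsNowhereDense C)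
    (hAB : A ⊆ B) (ε : ℝ) (hε : 0 < ε) :
    ∃ h : X ≃ₜ X, (∀ S : Set X, MeasurableSet S → μ (h '' S) = μ S) ∧
      (∀ a ∈ A, h a = a) ∧ h '' C ⊆ B ∧
      (⨆ x : X, dist (h x) x) + (⨆ x : X, dist (h.symm x) x) ≤ ε := by
  have hAi : interior A = ∅ := by rwa [IsNowhereDense, hA.closure_eq] at hAnd
  have hCi : interior C = ∅ := by rwa [IsNowhereDense, hC.closure_eq] at hCnd
  have hposr : ∀ U : Set X, IsOpen U → U.Nonempty → 0 < μ.real U := fun U hU hne =>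
    ENNReal.toReal_pos (hpos U hU hne).ne' (measure_ne_top _ _)
  -- The Subset Condition for real-valued measures.
  have hsc' : ∀ U V : Set X, IsClopen U → IsClopen V → μ.real U < μ.real V →
      ∃ W, W ⊆ V ∧ IsClopen W ∧ μ.real W = μ.real U := by
    intro U V hU hV hlt
    obtain ⟨W, hWV, hW, hWm⟩ := hsc U V hU hV
      ((ENNReal.toReal_lt_toReal (measure_ne_top _ _) (measure_ne_top _ _)).1 hlt)
    exact ⟨W, hWV, hW, congrArg ENNReal.toReal hWm⟩
  -- The complement of `C` is open and dense, so its part in `V` is nonempty and has positive measure.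
  have hnd : ∀ V : Set X, IsClopen V → V.Nonempty → μ.real (V ∩ C) < μ.real V := by
    intro V hV hne
    have hne' : (V \ C).Nonempty := by
      rw [nonempty_iff_ne_empty, Ne, sdiff_eq_empty]
      intro h
      have := interior_maximal h hV.isOpen hne.some_mem
      rw [hCi] at this
      exact this
    have h1 := hposr _ (hV.isOpen.sdiff hC) hne'
    have h2 := mu_split μ V C hC.measurableSet
    linarith
  -- An enumeration of all clopen sets; the `n`-th refinement step resolves `e n`.
  obtain ⟨e', he'⟩ : ∃ e : ℕ → TopologicalSpace.Clopens X, Function.Surjective e := by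
    have : Countable (TopologicalSpace.Clopens X) :=
      TopologicalSpace.Clopens.countable_iff_secondCountable.2 inferInstance
    exact exists_surjective_nat _
  set e : ℕ → Set X := fun n => e' n with he_def
  have heo : ∀ n, IsClopen (e n) := fun n => (e' n).isClopen
  have he : ∀ W, IsClopen W → ∃ n, e n = W := fun W hW => by
    obtain ⟨n, hn⟩ := he' ⟨W, hW⟩
    exact ⟨n, by rw [he_def]; simp only [hn]; rfl⟩
  obtain ⟨f₀, hf₀, hfine⟩ := exists_fine_labels (X := X) (half_pos hε)
  obtain ⟨K, hK, hAK, hKB, hacc, hmatch⟩ :=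
    exists_target μ hpos hB hBfull hA hAC hAB hAi hnd heo he hf₀
  choose! next hnext₁ hnext₂ hnext₃ hnext₄ using fun (n : ℕ) s hs =>
    exists_refinement μ hcont hsc' hA hC hK hAC hAK hnd hacc (heo n) s hs
  let s : ℕ → (X → List Bool) × (X → List Bool) := fun n => Nat.rec (f₀, f₀) next n
  have hs : ∀ n, IsPair μ A C K (s n) := by
    intro n
    induction n with
    | zero => exact ⟨hmatch, hf₀, hf₀⟩
    | succ n ih => exact hnext₁ n _ ih
  -- Equality of measures makes matched cells simultaneously nonempty.
  have hne : ∀ P Q : Set X, IsOpen P → μ.real P = μ.real Q → P.Nonempty → Q.Nonempty := by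
    intro P Q hP hPQ hPne
    by_contra hQ
    rw [not_nonempty_iff_eq_empty] at hQ
    have := hposr P hP hPne
    rw [hPQ, hQ, measureReal_empty] at this
    exact this.false
  have hsepg : ∀ n x y, (s (n + 1)).2 x = (s (n + 1)).2 y → (x ∈ e n ↔ y ∈ e n) :=
    fun n => hnext₄ n _ (hs n)
  obtain ⟨h, hh⟩ := exists_homeo he (f := fun n => (s n).1) (g := fun n => (s n).2)
    (fun n => (hs n).left) (fun n => (hs n).right)
    (fun n x => hne _ _ ((hs n).left.isOpen_fiber _) ((hs n).matched ((s n).1 x)).1 ⟨x, rfl⟩)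
    (fun n y => hne _ _ ((hs n).right.isOpen_fiber _) ((hs n).matched ((s n).2 y)).1.symm
      ⟨y, rfl⟩)
    (fun n => hnext₂ n _ (hs n)) (fun n => hnext₃ n _ (hs n)) hsepg
  -- At stage `0` the two labellings coincide, so `x` and `h x` share a cell.
  have hdist : ∀ x, dist (h x) x ≤ ε / 2 := fun x => hfine _ _ (hh x 0)
  have hfix : ∀ a ∈ A, h a = a := by
    intro a ha
    -- Matched cells have the same trace on `A`, so `a` lies in the target cell of its own label.
    refine eq_of_labels he (f := fun n => (s n).2) hsepg fun n => ?_
    rw [hh]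
    exact ((((hs n).matched ((s n).1 a)).2.1).subset ⟨rfl, ha⟩).1.symm
  refine ⟨h, preserves μ he (fun n => (hs n).left) (fun n => (hs n).right) (fun n l => ?_)
    hsepg h hh, hfix, ?_, ?_⟩
  · exact (ENNReal.toReal_eq_toReal_iff' (measure_ne_top _ _) (measure_ne_top _ _)).1
      ((hs n).matched l).1
  · rintro _ ⟨c, hc, rfl⟩
    by_cases hcA : c ∈ A
    · rw [hfix c hcA]
      exact hAB hcA
    refine hKB ?_
    by_contra hcK
    -- If `h c ∉ K`, some clopen neighbourhood `e n` of `h c` misses `K`; it contains the target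
    -- cell of `h c` at stage `n + 1`, which thus has no room although `C \ A` meets the source cell.
    obtain ⟨W, hW, hcW, hWK⟩ := compact_exists_isClopen_in_isOpen hK.isOpen_compl hcK
    obtain ⟨n, rfl⟩ := he W hW
    rcases ((hs (n + 1)).matched ((s (n + 1)).1 c)).2.2 with h0 | hlt
    · exact (h0.subset ⟨rfl, hc, hcA⟩ : c ∈ (∅ : Set X))
    · have hemp : (s (n + 1)).2 ⁻¹' {(s (n + 1)).1 c} ∩ (K \ A) = ∅ := by
        refine eq_empty_of_forall_notMem fun y hy => ?_
        have : y ∈ e n := (hsepg n (h c) y ((hh c (n + 1)).trans hy.1.symm)).1 hcW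
        exact hWK this hy.2.1
      rw [hemp, measureReal_empty] at hlt
      exact hlt.not_ge measureReal_nonneg
  · have h1 : ⨆ x : X, dist (h x) x ≤ ε / 2 := Real.iSup_le hdist (half_pos hε).le
    have h2 : ⨆ x : X, dist (h.symm x) x ≤ ε / 2 := by
      refine Real.iSup_le (fun x => ?_) (half_pos hε).le
      have := hdist (h.symm x)
      rwa [h.apply_symm_apply, dist_comm] at this
    linarith
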